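/- Fix an integer d ≥ 1, m > 0, x ∈ ℝ^d, times 0 < t_1 < … < t_n ≤ 1 (with t_0 = 0), s ∈ ℝ and ξ_1, …, ξ_n ∈ ℝ^d, and set η_i = ξ_i + ξ_{i+1} + … + ξ_n. Then the characteristic functions of W_{x,a} converge: lim_{a→0⁺} ∫_{Γ̃(x)} exp( i(s t + ξ_1·ω(t_1) + … + ξ_n·ω(t_n)) ) dW_{x,a}(t,ω) = (m²/2) · e^{i x·η_1} · ∫_0^∞ e^{(is − m²/2)t} exp( −(t/2) Σ_{i=1}^n (t_i − t_{i−1}) |η_i|² ) dt. -/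

import Mathlib

open MeasureTheory Filter Topology Real Set
open scoped RealInnerProductSpace ENNReal unitInterval

noncomputable section

/-- `ℝ^d` as a Euclidean space. -/
abbrev Ed (d : ℕ) := EuclideanSpace ℝ (Fin d)

/-- The space of continuous paths `[0,1] → ℝ^d`, with the uniform metric. -/
abbrev PathSp (d : ℕ) := C(unitInterval, Ed d)

instance (d : ℕ) : MeasurableSpace (PathSp d) := borel _
instance (d : ℕ) : BorelSpace (PathSp d) := ⟨rfl⟩

/-- Evaluation of a path at a real time, clamped to `[0,1]`. -/
def evalAt {d : ℕ} (ω : PathSp d) (t : ℝ) : Ed d := ω (Set.projIcc 0 1 zero_le_one t)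

/-- `Ω(x)`: continuous paths starting at `x`. -/
abbrev Omega1 {d : ℕ} (x : Ed d) := {ω : PathSp d // ω 0 = x}

/-- `Ω(x,y)`: continuous paths from `x` to `y`. -/
abbrev Omega2 {d : ℕ} (x y : Ed d) := {ω : PathSp d // ω 0 = x ∧ ω 1 = y}

/-- clamp a real number to `[0,1]`. -/
def clamp01 (r : ℝ) : ℝ := min 1 (max 0 r)

lemma clamp01_of_nonpos {r : ℝ} (h : r ≤ 0) : clamp01 r = 0 := by
  rw [clamp01, max_eq_left h, min_eq_right zero_le_one]

lemma clamp01_of_one_le {r : ℝ} (h : 1 ≤ r) : clamp01 r = 1 := by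
  rw [clamp01, max_eq_right (zero_le_one.trans h), min_eq_left h]

lemma clamp01_continuous : Continuous clamp01 :=
  continuous_const.min (continuous_const.max continuous_id)

/-- The piecewise linear path starting at `x` with `N` steps given by the increments `v i`,
the `i`-th step being linearly parametrized by `[i/N, (i+1)/N]`. -/
def pwLinE {d : ℕ} (x : Ed d) (N : ℕ) (v : Fin N → Ed d) : PathSp d :=
  ⟨fun t => x + ∑ i : Fin N, clamp01 ((N : ℝ) * (t : ℝ) - ((i : ℕ) : ℝ)) • v i, by
    refine continuous_const.add (continuous_finset_sum _ fun i _ => ?_)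
    exact ((clamp01_continuous.comp
      ((continuous_const.mul continuous_subtype_val).sub continuous_const)).smul
      continuous_const)⟩

lemma pwLinE_zero {d : ℕ} (x : Ed d) (N : ℕ) (v : Fin N → Ed d) :
    pwLinE x N v 0 = x := by
  show x + ∑ i : Fin N, clamp01 ((N : ℝ) * ((0 : unitInterval) : ℝ) - ((i : ℕ) : ℝ)) • v i = x
  have h : ∀ i : Fin N, clamp01 ((N : ℝ) * ((0 : unitInterval) : ℝ) - ((i : ℕ) : ℝ)) = 0 := by
    intro i
    apply clamp01_of_nonpos
    have h0 : ((0 : unitInterval) : ℝ) = 0 := rfl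
    rw [h0, mul_zero, zero_sub]
    exact neg_nonpos.mpr (Nat.cast_nonneg (i : ℕ))
  simp only [h, zero_smul, Finset.sum_const_zero, add_zero]

lemma pwLinE_one {d : ℕ} (x : Ed d) (N : ℕ) (v : Fin N → Ed d) :
    pwLinE x N v 1 = x + ∑ i : Fin N, v i := by
  show x + ∑ i : Fin N, clamp01 ((N : ℝ) * ((1 : unitInterval) : ℝ) - ((i : ℕ) : ℝ)) • v i
      = x + ∑ i : Fin N, v i
  have h : ∀ i : Fin N, clamp01 ((N : ℝ) * ((1 : unitInterval) : ℝ) - ((i : ℕ) : ℝ)) = 1 := by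
    intro i
    apply clamp01_of_one_le
    have h1 : ((1 : unitInterval) : ℝ) = 1 := rfl
    have h2 : ((i : ℕ) : ℝ) + 1 ≤ (N : ℝ) := by
      exact_mod_cast Nat.succ_le_of_lt i.isLt
    rw [h1, mul_one]; linarith
  simp only [h, one_smul]

/-- Piecewise linear element of `Ω(x)` with increments `v`. -/
def pwLin1 {d : ℕ} (x : Ed d) (N : ℕ) (v : Fin N → Ed d) : Omega1 x :=
  ⟨pwLinE x N v, pwLinE_zero x N v⟩

/-- Piecewise linear element of `Ω(x,y)` with increments `v` summing to `y - x`. -/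
def pwLin2 {d : ℕ} (x y : Ed d) (N : ℕ) (v : Fin N → Ed d)
    (h : x + ∑ i : Fin N, v i = y) : Omega2 x y :=
  ⟨pwLinE x N v, pwLinE_zero x N v, by rw [pwLinE_one, h]⟩

/-- the point preceding `x_i` in the list `x, x_1, …, x_N`. -/
def prevPt {d : ℕ} (x : Ed d) {N : ℕ} (xs : Fin N → Ed d) (i : Fin N) : Ed d :=
  if (i : ℕ) = 0 then x else xs ⟨(i : ℕ) - 1, lt_of_le_of_lt (Nat.pred_le _) i.isLt⟩

/-- The discrete measure `W_{x,a,N}`, i.e. the measure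
`∏_{i=1}^N (2πa²)^{-d/2} exp(-|x_i - x_{i-1}|²/(2a²)) dx_1 … dx_N` (with `x_0 = x`)
on `N`-step piecewise linear paths, placed on `{a²N} × Ω(x) ⊆ ℝ × Ω(x)`.
For `N = 0` this is the Dirac measure at `(0, constant path at x)`. -/
def WxaN {d : ℕ} (x : Ed d) (a : ℝ) (N : ℕ) : Measure (ℝ × Omega1 x) :=
  Measure.map
    (fun xs : Fin N → Ed d =>
      ((a ^ 2 * N : ℝ), pwLin1 x N fun i => xs i - prevPt x xs i))
    (volume.withDensity fun xs : Fin N → Ed d =>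
      ENNReal.ofReal (∏ i : Fin N,
        (2 * π * a ^ 2) ^ (-(d : ℝ) / 2) *
          Real.exp (-‖xs i - prevPt x xs i‖ ^ 2 / (2 * a ^ 2))))

/-- The approximating probability measure
`W_{x,a} = (1 - e^{-m²a²/2}) Σ_{N=0}^∞ e^{-m²a²N/2} W_{x,a,N}`. -/
def Wxa {d : ℕ} (x : Ed d) (m a : ℝ) : Measure (ℝ × Omega1 x) :=
  ENNReal.ofReal (1 - Real.exp (-m ^ 2 * a ^ 2 / 2)) •
    Measure.sum fun N : ℕ =>
      ENNReal.ofReal (Real.exp (-m ^ 2 * a ^ 2 * N / 2)) • WxaN x a N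

/-- The lattice step of length `a` in direction `p.1`, forwards or backwards
according to `p.2`. -/
def stepVec {d : ℕ} (a : ℝ) (p : Fin d × Bool) : Ed d :=
  (if p.2 then a else -a) • EuclideanSpace.single p.1 (1 : ℝ)

/-- The normalized counting measure `V'_{x,a,N}` giving mass `(2d)^{-N}` to each
(piecewise linearly parametrized) `N`-step nearest-neighbour lattice path in `x + aℤ^d`
starting at `x`.  For `N = 0` it is the Dirac measure at the constant path. -/
def VxaN {d : ℕ} (x : Ed d) (a : ℝ) (N : ℕ) : Measure (Omega1 x) :=
  Measure.sum fun s : Fin N → Fin d × Bool =>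
    (((2 * d : ℕ) : ℝ≥0∞) ^ N)⁻¹ •
      Measure.dirac (pwLin1 x N fun i => stepVec a (s i))

/-- The approximating probability measure
`V'_{x,a} = (1 - e^{-m²a²/(2d)}) Σ_{N=0}^∞ e^{-m²a²N/(2d)} V'_{x,a,N}`. -/
def Vxa {d : ℕ} (x : Ed d) (m a : ℝ) : Measure (Omega1 x) :=
  ENNReal.ofReal (1 - Real.exp (-m ^ 2 * a ^ 2 / (2 * d))) •
    Measure.sum fun N : ℕ =>
      ENNReal.ofReal (Real.exp (-m ^ 2 * a ^ 2 * N / (2 * d))) • VxaN x a N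

/-- `Wt` is the family of Wiener measures `(W_x^t)_{t>0}` on `Ω(x)`:
each `W_x^t` is a Borel probability measure, characterized by the characteristic
functions of its finite dimensional distributions
`∫ exp(i Σ_j ξ_j·ω(t_j)) dW_x^t = exp(-(t/2) Σ_j (t_j - t_{j-1}) |ξ_j + ⋯ + ξ_n|²
+ i x·(ξ_1 + ⋯ + ξ_n))` for all `0 = t_0 < t_1 < ⋯ < t_n ≤ 1`. -/
def IsWienerFamily {d : ℕ} (x : Ed d) (Wt : ℝ → Measure (Omega1 x)) : Prop :=
  ∀ t : ℝ, 0 < t → (IsProbabilityMeasure (Wt t) ∧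
    ∀ (n : ℕ) (ts : ℕ → ℝ), ts 0 = 0 → (∀ i < n, ts i < ts (i + 1)) → ts n ≤ 1 →
      ∀ ξ : Fin n → Ed d,
        (∫ ω : Omega1 x, Complex.exp (Complex.I *
            ((∑ i : Fin n, ⟪ξ i, evalAt ω.1 (ts ((i : ℕ) + 1))⟫ : ℝ) : ℂ)) ∂(Wt t))
          = Complex.exp
              (((-(t / 2) * ∑ i : Fin n,
                  (ts ((i : ℕ) + 1) - ts (i : ℕ)) * ‖∑ j ∈ Finset.Ici i, ξ j‖ ^ 2 : ℝ) : ℂ)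
                + Complex.I * ((⟪∑ j, ξ j, x⟫ : ℝ) : ℂ)))


lemma sum_clamp01_sub (A : ℝ) (N : ℕ) :
    ∑ k ∈ Finset.range N, clamp01 (A - k) = max 0 A - max 0 (A - N) := by
  induction N with
  | zero => simp
  | succ N ih =>
    rw [Finset.sum_range_succ, ih, clamp01]
    push_cast
    rcases le_total (A - N) 0 with h | h
    · rw [max_eq_left h, max_eq_left (by linarith : A - (N + 1) ≤ 0)]
      norm_num
    · rcases le_total (A - N) 1 with h' | h'
      · rw [max_eq_right h, min_eq_right h', max_eq_left (by linarith : A - (N + 1) ≤ 0)]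
        ring
      · rw [max_eq_right h, min_eq_left h', max_eq_right (by linarith : 0 ≤ A - (N + 1))]
        ring

lemma clamp01_mem_Icc (r : ℝ) : clamp01 r ∈ Icc (0 : ℝ) 1 :=
  ⟨le_min zero_le_one (le_max_left _ _), min_le_left _ _⟩

lemma clamp01_monotone : Monotone clamp01 := fun _ _ h =>
  min_le_min le_rfl (max_le_max le_rfl h)

lemma clamp01_mul_one_sub_le (r : ℝ) :
    clamp01 r * (1 - clamp01 r) ≤ clamp01 (r + 1) - clamp01 r := by
  have h := clamp01_mem_Icc r
  rcases le_total r 0 with h0 | h0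
  · rw [clamp01_of_nonpos h0]
    linarith [(clamp01_mem_Icc (r + 1)).1]
  · rw [clamp01_of_one_le (by linarith : 1 ≤ r + 1)]
    nlinarith [h.1, h.2]

lemma sum_clamp01_mul_one_sub_le (A : ℝ) (N : ℕ) :
    ∑ k ∈ Finset.range N, clamp01 (A - k) * (1 - clamp01 (A - k)) ≤ 1 := by
  have key : ∀ N : ℕ, ∑ k ∈ Finset.range N, clamp01 (A - k) * (1 - clamp01 (A - k))
      ≤ clamp01 (A + 1) - clamp01 (A - N + 1) := by
    intro N
    induction N with
    | zero => simp
    | succ N ih =>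
      rw [Finset.sum_range_succ]
      have := clamp01_mul_one_sub_le (A - N)
      have e : A - ((N + 1 : ℕ) : ℝ) + 1 = A - N := by push_cast; ring
      rw [e]
      linarith
  linarith [key N, (clamp01_mem_Icc (A + 1)).2, (clamp01_mem_Icc (A - N + 1)).1]

lemma abs_sum_clamp01_mul_sub_min_le {A B : ℝ} {N : ℕ} (hA : A ∈ Icc (0 : ℝ) N)
    (hB : B ∈ Icc (0 : ℝ) N) :
    |∑ k : Fin N, clamp01 (A - (k : ℕ)) * clamp01 (B - (k : ℕ)) - min A B| ≤ 1 := by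
  wlog h : A ≤ B generalizing A B
  · simpa only [mul_comm, min_comm] using this hB hA (le_of_not_ge h)
  rw [min_eq_left h,
    Fin.sum_univ_eq_sum_range (fun k : ℕ => clamp01 (A - k) * clamp01 (B - k)) N]
  have hsum : ∑ k ∈ Finset.range N, clamp01 (A - k) = A := by
    rw [sum_clamp01_sub, max_eq_right hA.1, max_eq_left (by linarith [hA.2]), sub_zero]
  have hle : ∑ k ∈ Finset.range N, clamp01 (A - k) * clamp01 (B - k)
      ≤ ∑ k ∈ Finset.range N, clamp01 (A - k) := by
    refine Finset.sum_le_sum fun k _ => ?_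
    nlinarith [(clamp01_mem_Icc (A - k)).1, (clamp01_mem_Icc (B - k)).2]
  have hge : ∑ k ∈ Finset.range N, clamp01 (A - k)
      - ∑ k ∈ Finset.range N, clamp01 (A - k) * clamp01 (B - k) ≤ 1 := by
    rw [← Finset.sum_sub_distrib]
    refine (Finset.sum_le_sum fun k _ => ?_).trans (sum_clamp01_mul_one_sub_le A N)
    have := clamp01_monotone (by linarith : A - k ≤ B - k)
    nlinarith [(clamp01_mem_Icc (A - k)).1]
  rw [abs_le]
  constructor <;> linarith

lemma norm_sum_smul_sq {ι E : Type*} [NormedAddCommGroup E] [InnerProductSpace ℝ E]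
    (s : Finset ι) (c : ι → ℝ) (ξ : ι → E) :
    ‖∑ i ∈ s, c i • ξ i‖ ^ 2 = ∑ i ∈ s, ∑ j ∈ s, c i * c j * ⟪ξ i, ξ j⟫ := by
  rw [← real_inner_self_eq_norm_sq, sum_inner]
  refine Finset.sum_congr rfl fun i _ => ?_
  rw [inner_sum]
  refine Finset.sum_congr rfl fun j _ => ?_
  rw [real_inner_smul_left, real_inner_smul_right, mul_assoc]

lemma le_of_forall_lt_succ {n : ℕ} {ts : ℕ → ℝ} (hmono : ∀ i < n, ts i < ts (i + 1)) {i j : ℕ}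
    (hij : i ≤ j) (hj : j ≤ n) : ts i ≤ ts j := by
  induction j, hij using Nat.le_induction with
  | base => exact le_rfl
  | succ j _ ih => exact (ih (by omega)).trans (hmono j (by omega)).le

/-- The covariance form of Brownian motion at the times `ts 1, …, ts n`, written through the
increments. -/
lemma sum_increment_mul_norm_tail_sq {E : Type*} [NormedAddCommGroup E] [InnerProductSpace ℝ E]
    {n : ℕ} {ts : ℕ → ℝ} (h0 : ts 0 = 0) (hmono : ∀ i < n, ts i < ts (i + 1)) (ξ : Fin n → E) :
    ∑ i : Fin n, (ts ((i : ℕ) + 1) - ts (i : ℕ)) * ‖∑ j ∈ Finset.Ici i, ξ j‖ ^ 2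
      = ∑ i : Fin n, ∑ j : Fin n,
          min (ts ((i : ℕ) + 1)) (ts ((j : ℕ) + 1)) * ⟪ξ i, ξ j⟫ := by
  have tele : ∀ j : Fin n, ∑ l : Fin n, (if l ≤ j then ts ((l : ℕ) + 1) - ts (l : ℕ) else 0)
      = ts ((j : ℕ) + 1) := by
    intro j
    rw [← Finset.sum_filter]
    have : ∑ l ∈ Finset.range ((j : ℕ) + 1), (ts (l + 1) - ts l) = ts ((j : ℕ) + 1) := by
      rw [Finset.sum_range_sub, h0, sub_zero]
    rw [← this]
    refine Finset.sum_bij (fun l _ => (l : ℕ)) ?_ ?_ ?_ ?_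
    · intro l hl
      simp only [Finset.mem_filter, Finset.mem_univ, true_and] at hl
      exact Finset.mem_range.2 (Nat.lt_succ_of_le hl)
    · intro l _ l' _ h
      exact Fin.ext h
    · intro b hb
      have hb' := Finset.mem_range.1 hb
      refine ⟨⟨b, by omega⟩, ?_, rfl⟩
      simp only [Finset.mem_filter, Finset.mem_univ, true_and, Fin.le_def]
      omega
    · intro l _
      rfl
  have hmin : ∀ j k : Fin n, ∑ l : Fin n,
      (if l ≤ j ∧ l ≤ k then ts ((l : ℕ) + 1) - ts (l : ℕ) else 0)
      = min (ts ((j : ℕ) + 1)) (ts ((k : ℕ) + 1)) := by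
    intro j k
    rcases le_total j k with h | h
    · rw [min_eq_left (le_of_forall_lt_succ hmono (by simpa using h) (by omega)), ← tele j]
      refine Finset.sum_congr rfl fun l _ => ?_
      have : (l ≤ j ∧ l ≤ k) ↔ l ≤ j := ⟨And.left, fun hl => ⟨hl, hl.trans h⟩⟩
      simp only [this]
    · rw [min_eq_right (le_of_forall_lt_succ hmono (by simpa using h) (by omega)), ← tele k]
      refine Finset.sum_congr rfl fun l _ => ?_
      have : (l ≤ j ∧ l ≤ k) ↔ l ≤ k := ⟨And.right, fun hl => ⟨hl.trans h, hl⟩⟩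
      simp only [this]
  have hnorm : ∀ l : Fin n, ‖∑ j ∈ Finset.Ici l, ξ j‖ ^ 2
      = ∑ i : Fin n, ∑ j : Fin n, if l ≤ i ∧ l ≤ j then ⟪ξ i, ξ j⟫ else 0 := by
    intro l
    have : ∑ j ∈ Finset.Ici l, ξ j = ∑ j : Fin n, (if l ≤ j then (1 : ℝ) else 0) • ξ j := by
      simp only [ite_smul, one_smul, zero_smul]
      rw [← Finset.sum_filter]
      congr 1
      ext j
      simp
    rw [this, norm_sum_smul_sq]
    refine Finset.sum_congr rfl fun i _ => Finset.sum_congr rfl fun j _ => ?_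
    by_cases hi : l ≤ i <;> by_cases hj : l ≤ j <;> simp [hi, hj]
  simp_rw [hnorm, Finset.mul_sum, ← hmin, Finset.sum_mul]
  rw [Finset.sum_comm]
  refine Finset.sum_congr rfl fun i _ => ?_
  rw [Finset.sum_comm]
  refine Finset.sum_congr rfl fun j _ => Finset.sum_congr rfl fun l _ => ?_
  by_cases h : l ≤ i ∧ l ≤ j <;> simp [h]

lemma abs_sum_norm_sq_sub_le {E : Type*} [NormedAddCommGroup E] [InnerProductSpace ℝ E]
    {n : ℕ} {τ : Fin n → ℝ} (hτ : ∀ i, τ i ∈ Icc (0 : ℝ) 1) (ξ : Fin n → E) (N : ℕ) :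
    |∑ k : Fin N, ‖∑ i, clamp01 (N * τ i - (k : ℕ)) • ξ i‖ ^ 2
        - N * ∑ i, ∑ j, min (τ i) (τ j) * ⟪ξ i, ξ j⟫|
      ≤ ∑ i, ∑ j, |⟪ξ i, ξ j⟫| := by
  have hN : ∀ i, (N : ℝ) * τ i ∈ Icc (0 : ℝ) N := fun i =>
    ⟨mul_nonneg (Nat.cast_nonneg N) (hτ i).1,
      mul_le_of_le_one_right (Nat.cast_nonneg N) (hτ i).2⟩
  have hexp : ∑ k : Fin N, ‖∑ i, clamp01 (N * τ i - (k : ℕ)) • ξ i‖ ^ 2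
        - N * ∑ i, ∑ j, min (τ i) (τ j) * ⟪ξ i, ξ j⟫
      = ∑ i, ∑ j, (∑ k : Fin N, clamp01 (N * τ i - (k : ℕ)) * clamp01 (N * τ j - (k : ℕ))
          - min (N * τ i) (N * τ j)) * ⟪ξ i, ξ j⟫ := by
    simp_rw [norm_sum_smul_sq, sub_mul, Finset.sum_sub_distrib]
    congr 1
    · rw [Finset.sum_comm]
      refine Finset.sum_congr rfl fun i _ => ?_
      rw [Finset.sum_comm]
      simp_rw [Finset.sum_mul]
    · simp_rw [Finset.mul_sum, ← mul_assoc, mul_min_of_nonneg _ _ (Nat.cast_nonneg (α := ℝ) N)]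
  rw [hexp]
  refine (Finset.abs_sum_le_sum_abs _ _).trans (Finset.sum_le_sum fun i _ => ?_)
  refine (Finset.abs_sum_le_sum_abs _ _).trans (Finset.sum_le_sum fun j _ => ?_)
  rw [abs_mul]
  exact mul_le_of_le_one_left (abs_nonneg _) (abs_sum_clamp01_mul_sub_min_le (hN i) (hN j))

lemma continuous_sub_prevPt (d N : ℕ) :
    Continuous fun p : Ed d × (Fin N → Ed d) => fun i => p.2 i - prevPt p.1 p.2 i := by
  refine continuous_pi fun i => ?_
  unfold prevPt
  split_ifs <;> fun_prop

lemma measurePreserving_sub_prevPt {d : ℕ} (x : Ed d) (N : ℕ) :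
    MeasurePreserving (fun (xs : Fin N → Ed d) i => xs i - prevPt x xs i) := by
  induction N generalizing x with
  | zero =>
    convert! MeasurePreserving.id (volume : Measure (Fin 0 → Ed d)) using 1
  | succ N ih =>
    have e := volume_preserving_piFinSuccAbove (fun _ : Fin (N + 1) => Ed d) 0
    have hskew : MeasurePreserving
        (fun p : Ed d × (Fin N → Ed d) => (p.1 - x, fun i => p.2 i - prevPt p.1 p.2 i))
        (volume.prod volume) (volume.prod volume) :=
      (measurePreserving_sub_right volume x).skew_product
        (g := fun y ys i => ys i - prevPt y ys i) (continuous_sub_prevPt d N).measurable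
        (ae_of_all _ fun y => (ih y).map_eq)
    convert! (e.symm.comp hskew).comp e using 1
    ext1 xs
    refine funext fun i => ?_
    refine Fin.cases ?_ (fun j => ?_) i
    · simp [prevPt, MeasurableEquiv.piFinSuccAbove]
    · rcases j with ⟨j, hj⟩
      cases j <;> rfl

lemma continuous_pwLinE {d : ℕ} (x : Ed d) (N : ℕ) : Continuous (pwLinE x N) := by
  refine ContinuousMap.continuous_of_continuous_uncurry _ ?_
  change Continuous fun p : (Fin N → Ed d) × unitInterval =>
    x + ∑ i : Fin N, clamp01 ((N : ℝ) * (p.2 : ℝ) - ((i : ℕ) : ℝ)) • p.1 i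
  have := clamp01_continuous
  fun_prop

lemma measurable_prodMk_pwLin1 {d : ℕ} (x : Ed d) (T : ℝ) (N : ℕ) :
    Measurable fun v : Fin N → Ed d => (T, pwLin1 x N v) :=
  measurable_const.prodMk (continuous_pwLinE x N).measurable.subtype_mk

lemma measurable_cexp_evalAt {d n : ℕ} (x : Ed d) (τ : Fin n → ℝ) (s : ℝ) (ξ : Fin n → Ed d) :
    Measurable fun p : ℝ × Omega1 x =>
      Complex.exp (Complex.I * ((s * p.1 + ∑ i, ⟪ξ i, evalAt p.2.1 (τ i)⟫ : ℝ) : ℂ)) := by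
  have h : ∀ t : ℝ, Measurable fun p : ℝ × Omega1 x => evalAt p.2.1 t := fun t =>
    (continuous_eval_const (F := PathSp d) _).measurable.comp
      (measurable_subtype_coe.comp measurable_snd)
  fun_prop

/-- The characteristic function of the centred Gaussian with covariance `a² • 1`. -/
lemma integral_gaussian_mul_cexp_inner {d : ℕ} {a : ℝ} (ha : 0 < a) (u : Ed d) :
    ∫ v : Ed d, (((2 * π * a ^ 2) ^ (-(d : ℝ) / 2) *
        Real.exp (-‖v‖ ^ 2 / (2 * a ^ 2)) : ℝ) : ℂ) * Complex.exp (Complex.I * (⟪u, v⟫ : ℝ))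
      = Complex.exp ((-(a ^ 2 / 2) * ‖u‖ ^ 2 : ℝ) : ℂ) := by
  have hb : 0 < (((2 * a ^ 2)⁻¹ : ℝ) : ℂ).re := by
    rw [Complex.ofReal_re]; positivity
  have key := GaussianFourier.integral_cexp_neg_mul_sq_norm_add hb Complex.I u
  have hpt : ∀ v : Ed d, (((2 * π * a ^ 2) ^ (-(d : ℝ) / 2) *
        Real.exp (-‖v‖ ^ 2 / (2 * a ^ 2)) : ℝ) : ℂ) * Complex.exp (Complex.I * (⟪u, v⟫ : ℝ))
      = (((2 * π * a ^ 2) ^ (-(d : ℝ) / 2) : ℝ) : ℂ) *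
        Complex.exp (-(((2 * a ^ 2)⁻¹ : ℝ) : ℂ) * ‖v‖ ^ 2 + Complex.I * (⟪u, v⟫ : ℝ)) := by
    intro v
    rw [Complex.ofReal_mul, Complex.ofReal_exp, mul_assoc, ← Complex.exp_add]
    congr 3
    push_cast
    ring
  simp_rw [hpt]
  rw [integral_const_mul, key, finrank_euclideanSpace_fin, ← mul_assoc]
  have hpi : ((π : ℂ) / (((2 * a ^ 2)⁻¹ : ℝ) : ℂ)) ^ ((d : ℂ) / 2)
      = (((2 * π * a ^ 2) ^ ((d : ℝ) / 2) : ℝ) : ℂ) := by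
    rw [Complex.ofReal_cpow (by positivity)]
    push_cast
    congr 1
    field_simp
  rw [hpi, ← Complex.ofReal_mul, ← Real.rpow_add (by positivity)]
  have : -(d : ℝ) / 2 + d / 2 = 0 := by ring
  rw [this, Real.rpow_zero, Complex.ofReal_one, one_mul, Complex.I_sq]
  congr 1
  push_cast
  have : (a : ℂ) ≠ 0 := by exact_mod_cast ha.ne'
  field_simp
  norm_num

lemma sum_inner_evalAt_pwLin1 {d n : ℕ} (x : Ed d) {τ : Fin n → ℝ}
    (hτ : ∀ i, τ i ∈ Icc (0 : ℝ) 1) (ξ : Fin n → Ed d) (N : ℕ) (v : Fin N → Ed d) :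
    ∑ i, ⟪ξ i, evalAt (pwLin1 x N v).1 (τ i)⟫ = ⟪∑ i, ξ i, x⟫
      + ∑ k : Fin N, ⟪∑ i, clamp01 (N * τ i - (k : ℕ)) • ξ i, v k⟫ := by
  have h : ∀ i, evalAt (pwLin1 x N v).1 (τ i)
      = x + ∑ k : Fin N, clamp01 (N * τ i - (k : ℕ)) • v k := by
    intro i
    rw [evalAt, projIcc_of_mem _ (hτ i)]
    rfl
  simp_rw [h, inner_add_right, Finset.sum_add_distrib, sum_inner, inner_sum]
  congr 1
  rw [Finset.sum_comm]
  simp_rw [real_inner_smul_left, real_inner_smul_right]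

lemma integral_WxaN_char {d n : ℕ} (x : Ed d) {a : ℝ} (ha : 0 < a) (N : ℕ) {τ : Fin n → ℝ}
    (hτ : ∀ i, τ i ∈ Icc (0 : ℝ) 1) (s : ℝ) (ξ : Fin n → Ed d) :
    ∫ p : ℝ × Omega1 x,
        Complex.exp (Complex.I * ((s * p.1 + ∑ i, ⟪ξ i, evalAt p.2.1 (τ i)⟫ : ℝ) : ℂ))
        ∂(WxaN x a N)
      = Complex.exp (Complex.I * ((s * (a ^ 2 * N) + ⟪∑ i, ξ i, x⟫ : ℝ) : ℂ)) *
        Complex.exp ((-(a ^ 2 / 2) *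
          ∑ k : Fin N, ‖∑ i, clamp01 (N * τ i - (k : ℕ)) • ξ i‖ ^ 2 : ℝ) : ℂ) := by
  set D : (Fin N → Ed d) → Fin N → Ed d := fun xs i => xs i - prevPt x xs i
  set u : Fin N → Ed d := fun k => ∑ i, clamp01 (N * τ i - (k : ℕ)) • ξ i
  set g : Ed d → ℝ := fun v => (2 * π * a ^ 2) ^ (-(d : ℝ) / 2) *
    Real.exp (-‖v‖ ^ 2 / (2 * a ^ 2)) with hg
  have hDp : MeasurePreserving D := measurePreserving_sub_prevPt x N
  have hgm : Measurable g := by fun_prop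
  have hg0 : ∀ v, 0 ≤ g v := fun v => by positivity
  have hfm := measurable_cexp_evalAt x τ s ξ
  have hW : WxaN x a N = Measure.map ((fun v : Fin N → Ed d => (a ^ 2 * N, pwLin1 x N v)) ∘ D)
      (volume.withDensity fun xs => ENNReal.ofReal (∏ i, g (D xs i))) := rfl
  rw [hW, integral_map ((measurable_prodMk_pwLin1 x _ N).comp hDp.measurable).aemeasurable
    hfm.aestronglyMeasurable]
  have hdm : Measurable fun v : Fin N → Ed d => ∏ i, g (v i) :=
    Finset.measurable_prod _ fun i _ => hgm.comp (measurable_pi_apply i)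
  rw [integral_withDensity_eq_integral_toReal_smul
    (f := fun xs => ENNReal.ofReal (∏ i, g (D xs i)))
    (hdm.comp hDp.measurable).ennreal_ofReal (ae_of_all _ fun _ => ENNReal.ofReal_lt_top)]
  set G : (Fin N → Ed d) → ℂ := fun v => (∏ i, (g (v i) : ℂ)) *
    Complex.exp (Complex.I * ((s * (a ^ 2 * N)
      + ∑ i, ⟪ξ i, evalAt (pwLin1 x N v).1 (τ i)⟫ : ℝ) : ℂ)) with hG
  have hGm : Measurable G := by
    refine Measurable.mul ?_ (hfm.comp (measurable_prodMk_pwLin1 x (a ^ 2 * N) N))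
    exact Finset.measurable_prod _ fun i _ =>
      Complex.measurable_ofReal.comp (hgm.comp (measurable_pi_apply i))
  have hstep : ∀ xs : Fin N → Ed d, (ENNReal.ofReal (∏ i, g (D xs i))).toReal •
      Complex.exp (Complex.I * ((s * (a ^ 2 * N)
        + ∑ i, ⟪ξ i, evalAt (pwLin1 x N (D xs)).1 (τ i)⟫ : ℝ) : ℂ)) = G (D xs) := by
    intro xs
    rw [ENNReal.toReal_ofReal (Finset.prod_nonneg fun i _ => hg0 _), hG, Complex.real_smul,
      Complex.ofReal_prod]
  refine (integral_congr_ae (ae_of_all _ hstep)).trans ?_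
  rw [← integral_map hDp.measurable.aemeasurable hGm.aestronglyMeasurable, hDp.map_eq]
  have hfac : ∀ v : Fin N → Ed d, G v
      = Complex.exp (Complex.I * ((s * (a ^ 2 * N) + ⟪∑ i, ξ i, x⟫ : ℝ) : ℂ)) *
        ∏ k, ((g (v k) : ℂ) * Complex.exp (Complex.I * (⟪u k, v k⟫ : ℝ))) := by
    intro v
    rw [Finset.prod_mul_distrib, ← Complex.exp_sum, mul_left_comm, ← Complex.exp_add, hG]
    simp only [sum_inner_evalAt_pwLin1 x hτ]
    congr 2
    push_cast
    rw [← Finset.mul_sum]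
    ring
  simp_rw [hfac]
  rw [integral_const_mul, integral_fintype_prod_volume_eq_prod
    (fun k v => (g v : ℂ) * Complex.exp (Complex.I * (⟪u k, v⟫ : ℝ)))]
  simp_rw [hg, integral_gaussian_mul_cexp_inner ha]
  rw [← Complex.exp_sum, ← Complex.ofReal_sum, Finset.mul_sum]

lemma isProbabilityMeasure_WxaN {d : ℕ} (x : Ed d) {a : ℝ} (ha : 0 < a) (N : ℕ) :
    IsProbabilityMeasure (WxaN x a N) := by
  have h := integral_WxaN_char (n := 0) x ha N (τ := Fin.elim0) (fun i => i.elim0) 0 Fin.elim0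
  simp only [zero_mul, Finset.univ_eq_empty, Finset.sum_empty, add_zero, inner_zero_left,
    Complex.ofReal_zero, mul_zero, Complex.exp_zero, integral_const, norm_zero, ne_eq,
    OfNat.ofNat_ne_zero, not_false_eq_true, zero_pow, Finset.sum_const_zero, Complex.real_smul, mul_one] at h
  have h' : ((WxaN x a N) univ).toReal = 1 := by exact_mod_cast h
  exact ⟨(ENNReal.toReal_eq_one_iff _).1 h'⟩

lemma integral_Wxa_char {d n : ℕ} (x : Ed d) {m a : ℝ} (hm : 0 < m) (ha : 0 < a)
    {τ : Fin n → ℝ} (hτ : ∀ i, τ i ∈ Icc (0 : ℝ) 1) (s : ℝ) (ξ : Fin n → Ed d) :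
    ∫ p : ℝ × Omega1 x,
        Complex.exp (Complex.I * ((s * p.1 + ∑ i, ⟪ξ i, evalAt p.2.1 (τ i)⟫ : ℝ) : ℂ))
        ∂(Wxa x m a)
      = Complex.exp (Complex.I * ((⟪∑ i, ξ i, x⟫ : ℝ) : ℂ)) *
        ((1 - Complex.exp (-((m ^ 2 / 2 : ℝ) : ℂ) * (a ^ 2 : ℝ))) *
        ∑' N : ℕ, Complex.exp ((Complex.I * s - (m ^ 2 / 2 : ℝ)) * (a ^ 2 : ℝ)) ^ N *
          (Real.exp (-(a ^ 2) *
            ((∑ k : Fin N, ‖∑ i, clamp01 (N * τ i - (k : ℕ)) • ξ i‖ ^ 2) / 2)) : ℝ)) := by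
  set F : ℝ × Omega1 x → ℂ := fun p =>
    Complex.exp (Complex.I * ((s * p.1 + ∑ i, ⟪ξ i, evalAt p.2.1 (τ i)⟫ : ℝ) : ℂ)) with hF
  have hFm : Measurable F := measurable_cexp_evalAt x τ s ξ
  have hF1 : ∀ p, ‖F p‖ = 1 := fun p => by
    simp only [hF]
    rw [mul_comm, Complex.norm_exp_ofReal_mul_I]
  have hprob := fun N => isProbabilityMeasure_WxaN x ha N
  have hpos : 0 < m ^ 2 * a ^ 2 / 2 := by positivity
  have hint : Integrable F (Measure.sum fun N : ℕ =>
      ENNReal.ofReal (Real.exp (-m ^ 2 * a ^ 2 * N / 2)) • WxaN x a N) := by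
    refine integrable_sum_measure (fun N => ?_) ?_
    · refine Integrable.smul_measure ?_ ENNReal.ofReal_ne_top
      exact (integrable_const (1 : ℝ)).mono' hFm.aestronglyMeasurable
        (ae_of_all _ fun p => (hF1 p).le)
    · have hsum := Real.summable_exp_nat_mul_iff.2 (neg_neg_of_pos hpos)
      refine hsum.congr fun N => ?_
      simp only [hF1, integral_const, smul_eq_mul, mul_one, measureReal_ennreal_smul_apply,
        probReal_univ, ENNReal.toReal_ofReal (Real.exp_nonneg _)]
      congr 1
      ring
  have hw : 0 ≤ 1 - Real.exp (-m ^ 2 * a ^ 2 / 2) := by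
    rw [sub_nonneg, Real.exp_le_one_iff]
    linarith
  rw [Wxa, integral_smul_measure, integral_sum_measure hint, ENNReal.toReal_ofReal hw,
    Complex.real_smul, mul_left_comm (Complex.exp _)]
  congr 1
  · push_cast
    congr 2
    ring
  · rw [← tsum_mul_left]
    refine tsum_congr fun N => ?_
    rw [integral_smul_measure, hF, integral_WxaN_char x ha N hτ s ξ,
      ENNReal.toReal_ofReal (Real.exp_nonneg _), Complex.real_smul, Complex.ofReal_exp,
      Complex.ofReal_exp, ← Complex.exp_nat_mul, ← Complex.exp_add, ← Complex.exp_add,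
      ← Complex.exp_add, ← Complex.exp_add]
    congr 1
    push_cast
    ring

lemma tendsto_one_sub_cexp_neg_mul_div (μ : ℂ) :
    Tendsto (fun b : ℝ => (1 - Complex.exp (-μ * b)) / b) (𝓝[>] 0) (𝓝 μ) := by
  have h : HasDerivAt (fun b : ℝ => Complex.exp (-μ * b)) (-μ) 0 := by
    have h1 : HasDerivAt (fun b : ℝ => -μ * (b : ℂ)) (-μ * 1) 0 :=
      (Complex.ofRealCLM.hasDerivAt).const_mul (-μ)
    simpa using h1.cexp
  have h2 := h.tendsto_slope_zero_right.neg
  rw [neg_neg] at h2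
  refine h2.congr fun b => ?_
  rw [zero_add, Complex.ofReal_zero, mul_zero, Complex.exp_zero, Complex.real_smul,
    Complex.ofReal_inv]
  ring

/-- Geometric averages with small success probability `1 - exp (-r * b)` of characters damped by
`exp (-b * Q N)`, where `Q` is linear up to a bounded error. -/
lemma tendsto_geometric_average {r c C : ℝ} (hr : 0 < r) (hc : 0 ≤ c) {Q : ℕ → ℝ}
    (hQ : ∀ N, 0 ≤ Q N) (hQc : ∀ N : ℕ, |Q N - N * c| ≤ C) (s : ℝ) :
    Tendsto (fun b : ℝ => (1 - Complex.exp (-(r : ℂ) * b)) *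
        ∑' N : ℕ, Complex.exp ((Complex.I * s - r) * b) ^ N * (Real.exp (-b * Q N) : ℝ))
      (𝓝[>] 0) (𝓝 (r / (r + c - Complex.I * s))) := by
  set l : ℂ := r + c - Complex.I * s with hl
  have hlre : 0 < l.re := by
    have : l.re = r + c := by simp [hl]
    rw [this]; linarith
  have hl0 : l ≠ 0 := fun h => by simp [h] at hlre
  have hmain : Tendsto (fun b : ℝ => (1 - Complex.exp (-(r : ℂ) * b)) *
      ∑' N : ℕ, Complex.exp (-l * b) ^ N) (𝓝[>] 0) (𝓝 (r / l)) := by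
    refine ((tendsto_one_sub_cexp_neg_mul_div r).div
      (tendsto_one_sub_cexp_neg_mul_div l) hl0).congr' ?_
    filter_upwards [self_mem_nhdsWithin] with b (hb : 0 < b)
    have hlt : ‖Complex.exp (-l * b)‖ < 1 := by
      rw [Complex.norm_exp, Real.exp_lt_one_iff]
      simp only [neg_mul, Complex.neg_re, Complex.re_mul_ofReal]
      nlinarith
    rw [tsum_geometric_of_norm_lt_one hlt, Pi.div_apply, ← div_eq_mul_inv,
      div_div_div_cancel_right₀ (by exact_mod_cast hb.ne')]
  have hdiff : Tendsto (fun b : ℝ => (1 - Complex.exp (-(r : ℂ) * b)) *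
      ∑' N : ℕ, Complex.exp ((Complex.I * s - r) * b) ^ N * (Real.exp (-b * Q N) : ℝ)
      - (1 - Complex.exp (-(r : ℂ) * b)) * ∑' N : ℕ, Complex.exp (-l * b) ^ N)
      (𝓝[>] 0) (𝓝 0) := by
    have hlim : Tendsto (fun b : ℝ => b * C) (𝓝[>] 0) (𝓝 0) := by
      have : Tendsto (fun b : ℝ => b * C) (𝓝 0) (𝓝 (0 * C)) := tendsto_id.mul_const C
      rw [zero_mul] at this
      exact this.mono_left nhdsWithin_le_nhds
    refine squeeze_zero_norm' ?_ hlim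
    filter_upwards [self_mem_nhdsWithin] with b (hb : 0 < b)
    set q : ℝ := Real.exp (-r * b) with hq
    have hq0 : 0 ≤ q := Real.exp_nonneg _
    have hq1 : q < 1 := Real.exp_lt_one_iff.2 (by nlinarith)
    have hqc : Complex.exp (-(r : ℂ) * b) = (q : ℂ) := by rw [hq]; push_cast; rfl
    set z : ℂ := Complex.exp ((Complex.I * s - r) * b) with hz
    have hzn : ‖z‖ = q := by
      rw [hz, Complex.norm_exp, hq]
      simp
    have hlz : ∀ N : ℕ, Complex.exp (-l * b) ^ N = z ^ N * (Real.exp (-b * (N * c)) : ℝ) := by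
      intro N
      rw [hz, ← Complex.exp_nat_mul, ← Complex.exp_nat_mul, Complex.ofReal_exp,
        ← Complex.exp_add]
      congr 1
      rw [hl]
      push_cast
      ring
    have hgeo := summable_geometric_of_lt_one hq0 hq1
    have hsummable : ∀ P : ℕ → ℝ, (∀ N, 0 ≤ P N) →
        Summable fun N : ℕ => z ^ N * (Real.exp (-b * P N) : ℝ) := by
      intro P hP
      refine Summable.of_norm_bounded hgeo fun N => ?_
      rw [norm_mul, norm_pow, hzn, Complex.norm_real, Real.norm_of_nonneg (Real.exp_nonneg _)]
      refine mul_le_of_le_one_right (pow_nonneg hq0 N) (Real.exp_le_one_iff.2 ?_)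
      nlinarith [hP N]
    simp_rw [hlz]
    have hS1 := hsummable Q hQ
    have hS2 := hsummable (fun N => N * c) fun N => by positivity
    rw [← mul_sub, ← hS1.tsum_sub hS2, norm_mul, hqc]
    have hexp : ∀ u v : ℝ, u ≤ 0 → v ≤ 0 → |Real.exp u - Real.exp v| ≤ |u - v| := by
      intro u v hu hv
      wlog h : v ≤ u generalizing u v
      · rw [abs_sub_comm, abs_sub_comm u]
        exact this v u hv hu (le_of_not_ge h)
      rw [abs_of_nonneg (sub_nonneg.2 (Real.exp_le_exp.2 h)), abs_of_nonneg (sub_nonneg.2 h)]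
      have h1 : Real.exp v = Real.exp u * Real.exp (v - u) := by
        rw [← Real.exp_add]; congr 1; ring
      have h2 := Real.add_one_le_exp (v - u)
      have h3 := Real.exp_le_one_iff.2 hu
      have h4 := Real.exp_pos u
      rw [h1]
      nlinarith
    have hbound : ‖∑' N : ℕ, (z ^ N * (Real.exp (-b * Q N) : ℝ)
        - z ^ N * (Real.exp (-b * (N * c)) : ℝ))‖ ≤ (1 - q)⁻¹ * (b * C) := by
      refine tsum_of_norm_bounded ((hasSum_geometric_of_lt_one hq0 hq1).mul_right (b * C))
        fun N => ?_
      rw [← mul_sub, norm_mul, norm_pow, hzn, ← Complex.ofReal_sub, Complex.norm_real,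
        Real.norm_eq_abs]
      refine mul_le_mul_of_nonneg_left ?_ (pow_nonneg hq0 N)
      refine (hexp _ _ (by nlinarith [hQ N]) ?_).trans ?_
      · have : 0 ≤ b * (N * c) := by positivity
        linarith
      · have : -b * Q N - -b * (N * c) = -b * (Q N - N * c) := by ring
        rw [this, abs_mul, abs_neg, abs_of_pos hb]
        exact mul_le_mul_of_nonneg_left (hQc N) hb.le
    have h1q : ‖(1 : ℂ) - q‖ = 1 - q := by
      rw [← Complex.ofReal_one, ← Complex.ofReal_sub, Complex.norm_real,
        Real.norm_of_nonneg (sub_nonneg.2 hq1.le)]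
    rw [h1q]
    calc (1 - q) * _ ≤ (1 - q) * ((1 - q)⁻¹ * (b * C)) :=
          mul_le_mul_of_nonneg_left hbound (sub_nonneg.2 hq1.le)
      _ = b * C := mul_inv_cancel_left₀ (sub_pos.2 hq1).ne' _
  simpa using hdiff.add hmain

/-- Convergence of the characteristic functions of `W_{x,a}` as `a → 0⁺`:
for `0 = t_0 < t_1 < ⋯ < t_n ≤ 1`, `s ∈ ℝ`, `ξ_1, …, ξ_n ∈ ℝ^d` and
`η_i = ξ_i + ⋯ + ξ_n`,
`∫ exp(i(st + Σ ξ_i·ω(t_i))) dW_{x,a}(t,ω)` tends to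
`(m²/2) e^{i x·η_1} ∫_0^∞ e^{(is - m²/2)t} exp(-(t/2) Σ (t_i - t_{i-1})|η_i|²) dt`. -/
theorem Wxa_char_tendsto (d : ℕ) (hd : 1 ≤ d) (m : ℝ) (hm : 0 < m) (x : Ed d)
    (n : ℕ) (ts : ℕ → ℝ) (h0 : ts 0 = 0) (hmono : ∀ i < n, ts i < ts (i + 1))
    (hle : ts n ≤ 1) (s : ℝ) (ξ : Fin n → Ed d) :
    Tendsto
      (fun a : ℝ => ∫ p : ℝ × Omega1 x,
        Complex.exp (Complex.I *
          ((s * p.1 + ∑ i : Fin n, ⟪ξ i, evalAt p.2.1 (ts ((i : ℕ) + 1))⟫ : ℝ) : ℂ))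
        ∂(Wxa x m a))
      (nhdsWithin 0 (Set.Ioi 0))
      (nhds ((m ^ 2 / 2 : ℂ) * Complex.exp (Complex.I * ((⟪∑ j, ξ j, x⟫ : ℝ) : ℂ)) *
        ∫ t in Set.Ioi (0 : ℝ),
          Complex.exp ((Complex.I * s - m ^ 2 / 2) * t) *
            ((Real.exp (-(t / 2) * ∑ i : Fin n,
              (ts ((i : ℕ) + 1) - ts (i : ℕ)) * ‖∑ j ∈ Finset.Ici i, ξ j‖ ^ 2) : ℝ) : ℂ))) := by
  have hτ : ∀ i : Fin n, ts ((i : ℕ) + 1) ∈ Icc (0 : ℝ) 1 := fun i =>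
    ⟨h0 ▸ le_of_forall_lt_succ hmono (Nat.zero_le _) (by omega),
      (le_of_forall_lt_succ hmono (by omega) le_rfl).trans hle⟩
  set V : ℝ := ∑ i : Fin n, (ts ((i : ℕ) + 1) - ts (i : ℕ)) * ‖∑ j ∈ Finset.Ici i, ξ j‖ ^ 2
    with hV
  have hV0 : 0 ≤ V := Finset.sum_nonneg fun i _ =>
    mul_nonneg (sub_nonneg.2 (hmono i i.isLt).le) (sq_nonneg _)
  set Q : ℕ → ℝ := fun N =>
    (∑ k : Fin N, ‖∑ i : Fin n, clamp01 (N * ts ((i : ℕ) + 1) - (k : ℕ)) • ξ i‖ ^ 2) / 2 with hQ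
  have hQ0 : ∀ N, 0 ≤ Q N := fun N => by positivity
  have hQc : ∀ N : ℕ, |Q N - N * (V / 2)| ≤ (∑ i, ∑ j, |⟪ξ i, ξ j⟫|) / 2 := by
    intro N
    have h := abs_sum_norm_sq_sub_le hτ ξ N
    rw [← sum_increment_mul_norm_tail_sq h0 hmono ξ, ← hV] at h
    have e : Q N - N * (V / 2) = (∑ k : Fin N,
        ‖∑ i : Fin n, clamp01 (N * ts ((i : ℕ) + 1) - (k : ℕ)) • ξ i‖ ^ 2 - N * V) / 2 := by
      rw [hQ]; ring
    rw [e, abs_div, abs_two]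
    exact div_le_div_of_nonneg_right h zero_le_two
  have hr : 0 < m ^ 2 / 2 := by positivity
  have hsq : Tendsto (fun a : ℝ => a ^ 2) (𝓝[>] 0) (𝓝[>] 0) := by
    refine tendsto_nhdsWithin_iff.2 ⟨?_, ?_⟩
    · have : Tendsto (fun a : ℝ => a ^ 2) (𝓝 0) (𝓝 (0 ^ 2)) := tendsto_id.pow 2
      rw [zero_pow two_ne_zero] at this
      exact this.mono_left nhdsWithin_le_nhds
    · filter_upwards [self_mem_nhdsWithin] with a (ha : 0 < a)
      exact pow_pos ha 2
  have hlim := ((tendsto_geometric_average hr (by positivity : 0 ≤ V / 2) hQ0 hQc s).comp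
    hsq).const_mul (Complex.exp (Complex.I * ((⟪∑ j, ξ j, x⟫ : ℝ) : ℂ)))
  have hint : ∫ t in Set.Ioi (0 : ℝ), Complex.exp ((Complex.I * s - m ^ 2 / 2) * t) *
      ((Real.exp (-(t / 2) * V) : ℝ) : ℂ)
      = (((m ^ 2 / 2 : ℝ) : ℂ) + ((V / 2 : ℝ) : ℂ) - Complex.I * s)⁻¹ := by
    have hre : (Complex.I * s - ((m ^ 2 / 2 : ℝ) : ℂ) - ((V / 2 : ℝ) : ℂ)).re < 0 := by
      simp only [Complex.sub_re, Complex.re_mul_ofReal, Complex.I_re, zero_mul,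
        Complex.ofReal_re]
      linarith
    have hpt : ∀ t : ℝ, Complex.exp ((Complex.I * s - m ^ 2 / 2) * t) *
        ((Real.exp (-(t / 2) * V) : ℝ) : ℂ)
        = Complex.exp ((Complex.I * s - ((m ^ 2 / 2 : ℝ) : ℂ) - ((V / 2 : ℝ) : ℂ)) * t) := by
      intro t
      rw [Complex.ofReal_exp, ← Complex.exp_add]
      congr 1
      push_cast
      ring
    simp_rw [hpt]
    rw [integral_exp_mul_complex_Ioi hre, Complex.ofReal_zero, mul_zero, Complex.exp_zero,
      neg_div, ← div_neg, one_div]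
    congr 1
    ring
  rw [hint]
  have hval : (m ^ 2 / 2 : ℂ) * Complex.exp (Complex.I * ((⟪∑ j, ξ j, x⟫ : ℝ) : ℂ)) *
      (((m ^ 2 / 2 : ℝ) : ℂ) + ((V / 2 : ℝ) : ℂ) - Complex.I * s)⁻¹
      = Complex.exp (Complex.I * ((⟪∑ j, ξ j, x⟫ : ℝ) : ℂ)) *
        (((m ^ 2 / 2 : ℝ) : ℂ) / (((m ^ 2 / 2 : ℝ) : ℂ) + ((V / 2 : ℝ) : ℂ)
          - Complex.I * s)) := by
    rw [div_eq_mul_inv ((m ^ 2 / 2 : ℝ) : ℂ)]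
    push_cast
    ring
  rw [hval]
  refine hlim.congr' ?_
  filter_upwards [self_mem_nhdsWithin] with a (ha : 0 < a)
  exact (integral_Wxa_char x hm ha hτ s ξ).symm

end
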